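/- Let λ, μ, ρ ∈ ℝ with ρ > 0, μ > 0 and λ + 2μ > 0, and set c_l = √((λ+2μ)/ρ) and c_s = √(μ/ρ). Let g : ℝ² → ℝ be a Schwartz function with Fourier transform ĝ, and let h : ℝ → ℝ be continuous. Write r = √(ξ²+η²) and define, for (ξ,η) ≠ (0,0), û₁(ξ,η,t) = ∫₀ᵗ [ sin(c_l(t−s)r)/(c_l r) − sin(c_s(t−s)r)/(c_s r) ] · (ξη/r²) ĝ(ξ,η) h(s) ds and û₂(ξ,η,t) = ∫₀ᵗ [ sin(c_l(t−s)r)/(c_l r) · (η²/r²) + sin(c_s(t−s)r)/(c_s r) · (ξ²/r²) ] ĝ(ξ,η) h(s) ds, with the values at the origin û₁(0,0,t) = 0 and û₂(0,0,t) = ĝ(0,0) ∫₀ᵗ (t−s) h(s) ds. Define u_d(x,y,t) = (2π)⁻² ∫_{ℝ²} e^{i(xξ+yη)} û_d(ξ,η,t) d(ξ,η) for d = 1, 2. Then all arising integrals converge absolutely, u₁ and u₂ are twice continuously differentiable on ℝ² × ℝ, and they satisfy ∂ₜₜu₁ = (1/ρ)[(λ+2μ)∂ₓₓu₁ + μ ∂ᵧᵧu₁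 + (λ+μ)∂ₓ∂ᵧu₂], ∂ₜₜu₂ = (1/ρ)[(λ+2μ)∂ᵧᵧu₂ + μ ∂ₓₓu₂ + (λ+μ)∂ₓ∂ᵧu₁] + g(x,y)h(t) for all (x,y,t), together with u_d(x,y,0) = 0 and ∂ₜu_d(x,y,0) = 0 for d = 1, 2 and all (x,y). -/

import Mathlib

open MeasureTheory

/-! On the Fourier side the equations of motion decouple, frequency by frequency, into forced
oscillators: the orthogonal projection onto the frequency direction selects the pressure mode, of
angular frequency `c_l r`, and its complement the shear mode, of angular frequency `c_s r`.
Duhamel's formula with the propagator `sin(ωτ)/ω` solves each oscillator with zero initial data. The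
projections and, locally uniformly in time, the propagators are bounded, so the solution decays as
rapidly in frequency as `ĝ`; this permits differentiation under the inverse Fourier integral, where
a space derivative becomes multiplication by `i` times a frequency coordinate, and Fourier inversion
turns the source `h ĝ` back into `h g`. -/

theorem abs_snd_le_of_mem_closedBall {V : Type*} [PseudoMetricSpace V] {q q₀ : V × ℝ}
    (hq : q ∈ Metric.closedBall q₀ 1) : |q.2| ≤ |q₀.2| + 1 := by
  have hdist : |q.2 - q₀.2| ≤ 1 := (le_max_right _ _).trans hq
  linarith [abs_sub_abs_le_abs_sub q.2 q₀.2]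

section Calculus

variable {E : Type*} [NormedAddCommGroup E] [NormedSpace ℝ E]

theorem iteratedDeriv_two_eq_of_hasDerivAt {f f' : ℝ → E} {f'' : E} {x : ℝ}
    (hf : ∀ x, HasDerivAt f (f' x) x) (hf' : HasDerivAt f' f'' x) : iteratedDeriv 2 f x = f'' := by
  rw [iteratedDeriv_succ, iteratedDeriv_one, funext fun x => (hf x).deriv, hf'.deriv]

theorem hasDerivAt_intervalIntegral_of_continuous {f f' : ℝ → ℝ → E} (hf : ∀ x, Continuous (f x))
    (hf' : Continuous (Function.uncurry f')) (hd : ∀ x s, HasDerivAt (fun x => f x s) (f' x s) x)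
    (a b x : ℝ) : HasDerivAt (fun x => ∫ s in a..b, f x s) (∫ s in a..b, f' x s) x := by
  obtain ⟨C, hC⟩ := ((isCompact_closedBall x 1).prod
    (isCompact_uIcc (a := a) (b := b))).exists_bound_of_continuousOn hf'.continuousOn
  refine (intervalIntegral.hasDerivAt_integral_of_dominated_loc_of_deriv_le (bound := fun _ => C)
    (Metric.closedBall_mem_nhds x one_pos) (.of_forall fun y => (hf y).aestronglyMeasurable)
    ((hf x).intervalIntegrable _ _)
    (Continuous.aestronglyMeasurable (by fun_prop)) ?_ (by simp) ?_).2
  · exact .of_forall fun s hs y hy => hC (y, s) ⟨hy, Set.uIoc_subset_uIcc hs⟩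
  · exact .of_forall fun s _ y _ => hd y s

theorem hasDerivAt_intervalIntegral_leibniz [CompleteSpace E] {f f' : ℝ → ℝ → E}
    (hf : Continuous (Function.uncurry f)) (hf' : Continuous (Function.uncurry f'))
    (hd : ∀ x s, HasDerivAt (fun x => f x s) (f' x s) x) (a t : ℝ) :
    HasDerivAt (fun t => ∫ s in a..t, f t s) (f t t + ∫ s in a..t, f' t s) t := by
  have hspan : Continuous fun e : E => ContinuousLinearMap.toSpanSingleton ℝ e :=
    (ContinuousLinearMap.toSpanSingletonCLE (𝕜 := ℝ) (E := E)).continuous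
  have hpartial := (hasStrictFDerivAt_uncurry_coprod (𝕜 := ℝ) (u := (t, t))
    (f := fun b x => ∫ s in a..b, f x s)
    (f₁ := fun b x => .toSpanSingleton ℝ (f x b))
    (f₂ := fun b x => .toSpanSingleton ℝ (∫ s in a..b, f' x s))
    (.of_forall fun u => ((show Continuous (f u.2) by fun_prop).integral_hasStrictDerivAt
      a u.1).hasDerivAt.hasFDerivAt)
    (.of_forall fun u => (hasDerivAt_intervalIntegral_of_continuous (fun x => by fun_prop) hf' hd
      a u.1 u.2).hasFDerivAt)
    (hspan.comp (hf.comp continuous_swap)).continuousAt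
    (hspan.comp (intervalIntegral.continuous_parametric_intervalIntegral_of_continuous
      (f := fun (u : ℝ × ℝ) s => f' u.2 s) (by fun_prop) continuous_fst)).continuousAt).hasFDerivAt
  have hdiag : HasDerivAt (fun t : ℝ => (t, t)) (1, 1) t :=
    (hasDerivAt_id t).prodMk (hasDerivAt_id t)
  simpa [Function.HasUncurry.uncurry, Function.comp_def] using
    HasFDerivAt.comp_hasDerivAt (f := fun t => (t, t)) t hpartial hdiag

end Calculus

section Duhamel

variable {E : Type*} [NormedAddCommGroup E] [NormedSpace ℝ E]

/-- The Duhamel integral `∫₀ᵗ k(t - s) h(s) ds` of a source `h` against a propagator `k`. -/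
noncomputable def duhamel (k : ℝ → ℝ) (h : ℝ → E) (t : ℝ) : E :=
  ∫ s in (0 : ℝ)..t, k (t - s) • h s

variable {k k' l : ℝ → ℝ} {h : ℝ → E}

@[simp]
theorem duhamel_zero_time (k : ℝ → ℝ) (h : ℝ → E) : duhamel k h 0 = 0 :=
  intervalIntegral.integral_same

theorem duhamel_add (hk : Continuous k) (hl : Continuous l) (hh : Continuous h) (t : ℝ) :
    duhamel (fun τ => k τ + l τ) h t = duhamel k h t + duhamel l h t := by
  simp only [duhamel, add_smul]
  exact intervalIntegral.integral_add (Continuous.intervalIntegrable (by fun_prop) _ _)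
    (Continuous.intervalIntegrable (by fun_prop) _ _)

theorem duhamel_const_mul (c : ℝ) (k : ℝ → ℝ) (h : ℝ → E) (t : ℝ) :
    duhamel (fun τ => c * k τ) h t = c • duhamel k h t := by
  simp only [duhamel, mul_smul]
  exact intervalIntegral.integral_smul _ _

theorem continuous_duhamel (hk : Continuous k) (hh : Continuous h) : Continuous (duhamel k h) :=
  intervalIntegral.continuous_parametric_intervalIntegral_of_continuous
    (f := fun t s => k (t - s) • h s) (by fun_prop) continuous_id

theorem hasDerivAt_duhamel [CompleteSpace E] (hk : ∀ τ, HasDerivAt k (k' τ) τ)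
    (hk' : Continuous k') (hh : Continuous h) (t : ℝ) :
    HasDerivAt (duhamel k h) (k 0 • h t + duhamel k' h t) t := by
  have hk_cont : Continuous k := continuous_iff_continuousAt.2 fun τ => (hk τ).continuousAt
  have hleibniz := hasDerivAt_intervalIntegral_leibniz
    (f := fun t s => k (t - s) • h s) (f' := fun t s => k' (t - s) • h s) (by fun_prop)
    (by fun_prop) (fun x s => ((hk (x - s)).comp_sub_const x s).smul_const (h s)) 0 t
  simp only [sub_self] at hleibniz
  exact hleibniz

theorem norm_duhamel_le {A B T t : ℝ} (hk : ∀ τ, |τ| ≤ T → |k τ| ≤ B)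
    (hh : ∀ s, |s| ≤ T → ‖h s‖ ≤ A) (ht : |t| ≤ T) : ‖duhamel k h t‖ ≤ B * A * T := by
  have hB : 0 ≤ B := (abs_nonneg _).trans (hk t ht)
  have hA : 0 ≤ A := (norm_nonneg _).trans (hh t ht)
  have hbound : ∀ s ∈ Set.uIoc 0 t, ‖k (t - s) • h s‖ ≤ B * A := by
    intro s hs
    have hs' : s ∈ Set.uIcc 0 t := Set.uIoc_subset_uIcc hs
    have hs_le : |s| ≤ T := by simpa using (Set.abs_sub_left_of_mem_uIcc hs').trans (by simpa)
    have hts_le : |t - s| ≤ T := by simpa using (Set.abs_sub_right_of_mem_uIcc hs').trans (by simpa)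
    rw [norm_smul, Real.norm_eq_abs]
    exact mul_le_mul (hk _ hts_le) (hh s hs_le) (norm_nonneg _) hB
  calc ‖duhamel k h t‖ ≤ B * A * |t - 0| :=
        intervalIntegral.norm_integral_le_of_norm_le_const hbound
    _ ≤ B * A * T := by rw [sub_zero]; gcongr

theorem measurable_duhamel {X : Type*} [MeasurableSpace X] {k : X → ℝ → ℝ} {h : ℝ → ℝ}
    (hk : Measurable (Function.uncurry k)) (hh : Measurable h) (t : ℝ) :
    Measurable fun x => duhamel (k x) h t := by
  have hint : Measurable (Function.uncurry fun (x : X) (s : ℝ) => k x (t - s) * h s) :=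
    (hk.comp (measurable_fst.prodMk (measurable_const.sub measurable_snd))).mul
      (hh.comp measurable_snd)
  exact (hint.stronglyMeasurable.integral_prod_right.sub
    hint.stronglyMeasurable.integral_prod_right).measurable

end Duhamel

section Symbols

variable {W E G : Type*} [NormedAddCommGroup W] [MeasurableSpace W] {μ : Measure W}
  [NormedAddCommGroup E] [NormedAddCommGroup G]

/-- A time-dependent symbol `F p t` on the frequency space `W`: measurable in the frequency `p`,
continuous in the time `t`, and rapidly decreasing in `p` locally uniformly in `t`. -/
structure IsSymbol (μ : Measure W) (F : W → ℝ → E) : Prop where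
  aestronglyMeasurable : ∀ t, AEStronglyMeasurable (F · t) μ
  continuous : ∀ p, Continuous (F p)
  decay : ∀ (T : ℝ) (k : ℕ), ∃ C, ∀ p t, |t| ≤ T → (1 + ‖p‖) ^ k * ‖F p t‖ ≤ C

namespace IsSymbol

variable {F F' : W → ℝ → E}

theorem freeze_time (hF : IsSymbol μ F) (t : ℝ) : IsSymbol μ fun p _ => F p t where
  aestronglyMeasurable _ := hF.aestronglyMeasurable t
  continuous _ := continuous_const
  decay _ k := (hF.decay |t| k).imp fun _ hC p _ _ => hC p t le_rfl

theorem zero : IsSymbol μ fun (_ : W) (_ : ℝ) => (0 : E) where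
  aestronglyMeasurable _ := aestronglyMeasurable_const
  continuous _ := continuous_const
  decay _ _ := ⟨0, by simp⟩

theorem add (hF : IsSymbol μ F) (hF' : IsSymbol μ F') : IsSymbol μ fun p t => F p t + F' p t where
  aestronglyMeasurable t := (hF.aestronglyMeasurable t).add (hF'.aestronglyMeasurable t)
  continuous p := (hF.continuous p).add (hF'.continuous p)
  decay T k := by
    obtain ⟨C, hC⟩ := hF.decay T k
    obtain ⟨D, hD⟩ := hF'.decay T k
    refine ⟨C + D, fun p t ht => ?_⟩
    calc (1 + ‖p‖) ^ k * ‖F p t + F' p t‖ ≤ (1 + ‖p‖) ^ k * (‖F p t‖ + ‖F' p t‖) := by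
          gcongr; exact norm_add_le _ _
      _ ≤ C + D := by rw [mul_add]; exact add_le_add (hC p t ht) (hD p t ht)

theorem exists_integrable_bound [μ.HasTemperateGrowth] (hF : IsSymbol μ F) (T : ℝ) :
    ∃ b : W → ℝ, Integrable b μ ∧ ∀ p t, |t| ≤ T → ‖F p t‖ ≤ b p := by
  obtain ⟨C, hC⟩ := hF.decay T μ.integrablePower
  refine ⟨fun p => C * (1 + ‖p‖) ^ (-(μ.integrablePower : ℝ)),
    (Measure.integrable_pow_neg_integrablePower μ).const_mul C, fun p t ht => ?_⟩
  beta_reduce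
  rw [Real.rpow_neg (by positivity), Real.rpow_natCast, ← div_eq_mul_inv,
    le_div_iff₀ (by positivity), mul_comm]
  exact hC p t ht

variable [NormedSpace ℝ E] [NormedSpace ℝ G]

theorem clm_comp (hF : IsSymbol μ F) (A : E →L[ℝ] G) : IsSymbol μ fun p t => A (F p t) where
  aestronglyMeasurable t := A.continuous.comp_aestronglyMeasurable (hF.aestronglyMeasurable t)
  continuous p := A.continuous.comp (hF.continuous p)
  decay T k := by
    obtain ⟨C, hC⟩ := hF.decay T k
    refine ⟨‖A‖ * C, fun p t ht => ?_⟩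
    calc (1 + ‖p‖) ^ k * ‖A (F p t)‖ ≤ (1 + ‖p‖) ^ k * (‖A‖ * ‖F p t‖) := by
          gcongr; exact A.le_opNorm _
      _ = ‖A‖ * ((1 + ‖p‖) ^ k * ‖F p t‖) := by ring
      _ ≤ ‖A‖ * C := by gcongr; exact hC p t ht

theorem const_smul [NormedSpace ℂ E] [IsScalarTower ℝ ℂ E] (hF : IsSymbol μ F) (c : ℂ) :
    IsSymbol μ fun p t => c • F p t :=
  hF.clm_comp (c • ContinuousLinearMap.id ℝ E)

theorem clm_apply [NormedSpace ℝ W] [OpensMeasurableSpace W] [SecondCountableTopology W]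
    (hF : IsSymbol μ F) (M : W →L[ℝ] E →L[ℝ] G) : IsSymbol μ fun p t => M p (F p t) where
  aestronglyMeasurable t :=
    M.aestronglyMeasurable_comp₂ aestronglyMeasurable_id (hF.aestronglyMeasurable t)
  continuous p := (M p).continuous.comp (hF.continuous p)
  decay T k := by
    obtain ⟨C, hC⟩ := hF.decay T (k + 1)
    refine ⟨‖M‖ * C, fun p t ht => ?_⟩
    calc (1 + ‖p‖) ^ k * ‖M p (F p t)‖ ≤ (1 + ‖p‖) ^ k * (‖M‖ * (1 + ‖p‖) * ‖F p t‖) := by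
          gcongr
          refine (M.le_opNorm₂ _ _).trans ?_
          gcongr
          exact le_add_of_nonneg_left zero_le_one
      _ = ‖M‖ * ((1 + ‖p‖) ^ (k + 1) * ‖F p t‖) := by ring
      _ ≤ ‖M‖ * C := by gcongr; exact hC p t ht

theorem smul_of_bounded {k : W → ℝ → ℝ} (hF : IsSymbol μ F)
    (hk_meas : ∀ t, Measurable (k · t)) (hk_cont : ∀ p, Continuous (k p))
    (hk_bdd : ∀ T, ∃ B, ∀ p t, |t| ≤ T → |k p t| ≤ B) :
    IsSymbol μ fun p t => k p t • F p t where
  aestronglyMeasurable t := (hk_meas t).aestronglyMeasurable.smul (hF.aestronglyMeasurable t)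
  continuous p := (hk_cont p).smul (hF.continuous p)
  decay T j := by
    obtain ⟨C, hC⟩ := hF.decay T j
    obtain ⟨B, hB⟩ := hk_bdd T
    refine ⟨B * C, fun p t ht => ?_⟩
    have hB_nonneg : 0 ≤ B := (abs_nonneg _).trans (hB p t ht)
    calc (1 + ‖p‖) ^ j * ‖k p t • F p t‖ = |k p t| * ((1 + ‖p‖) ^ j * ‖F p t‖) := by
          rw [norm_smul, Real.norm_eq_abs]; ring
      _ ≤ B * C := by gcongr; exacts [hB p t ht, hC p t ht]

theorem of_schwartz [NormedSpace ℝ W] [OpensMeasurableSpace W] [SecondCountableTopology W]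
    (f : SchwartzMap W E) : IsSymbol μ fun p _ => f p where
  aestronglyMeasurable _ := f.continuous.aestronglyMeasurable
  continuous _ := continuous_const
  decay _ k := by
    refine ⟨2 ^ k * (Finset.Iic (k, 0)).sup (fun m => SchwartzMap.seminorm ℝ m.1 m.2) f,
      fun p _ _ => ?_⟩
    rw [← norm_iteratedFDeriv_zero (𝕜 := ℝ) (f := f)]
    exact SchwartzMap.one_add_le_sup_seminorm_apply (m := (k, 0)) le_rfl le_rfl f p

end IsSymbol

end Symbols

section Synthesis

variable {V W E : Type*} [NormedAddCommGroup V] [NormedSpace ℝ V]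
  [NormedAddCommGroup W] [NormedSpace ℝ W] [MeasurableSpace W] {μ : Measure W}
  [NormedAddCommGroup E] [NormedSpace ℂ E] {F F' : W → ℝ → E}

theorem IsSymbol.integrable_planeWave_smul [OpensMeasurableSpace W] [μ.HasTemperateGrowth]
    (hF : IsSymbol μ F) (L : V →L[ℝ] W →L[ℝ] ℝ) (q : V × ℝ) :
    Integrable (fun p => Complex.exp (Complex.I * (L q.1 p : ℂ)) • F p q.2) μ := by
  obtain ⟨b, hb, hFb⟩ := hF.exists_integrable_bound |q.2|
  refine hb.mono' ((Continuous.aestronglyMeasurable (by fun_prop)).smul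
    (hF.aestronglyMeasurable q.2)) (.of_forall fun p => ?_)
  rw [norm_smul, Complex.norm_exp_I_mul_ofReal, one_mul]
  exact hFb p q.2 le_rfl

variable [NormedSpace ℝ E] {L : V →L[ℝ] W →L[ℝ] ℝ}

/-- The superposition `∫ exp(i L(x, p)) F(p, t) dμ(p)` of the plane waves with amplitudes `F`, at
the space-time point `q = (x, t)`; the pairing `L` of positions with frequencies and the measure
`μ` fix the normalization of the inverse Fourier transform. -/
noncomputable def synth (L : V →L[ℝ] W →L[ℝ] ℝ) (μ : Measure W) (F : W → ℝ → E) (q : V × ℝ) : E :=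
  ∫ p, Complex.exp (Complex.I * (L q.1 p : ℂ)) • F p q.2 ∂μ

theorem synth_const_smul (c : ℂ) (F : W → ℝ → E) (q : V × ℝ) :
    synth L μ (fun p t => c • F p t) q = c • synth L μ F q := by
  simp only [synth, smul_comm _ c]
  exact integral_smul c _

theorem synth_eq_zero {q : V × ℝ} (hF : ∀ p, F p q.2 = 0) : synth L μ F q = 0 := by
  simp [synth, hF]

variable [OpensMeasurableSpace W] [μ.HasTemperateGrowth]

theorem continuous_synth (hF : IsSymbol μ F) :
    Continuous (synth L μ F) := by
  refine continuous_iff_continuousAt.2 fun q₀ => ?_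
  obtain ⟨b, hb, hFb⟩ := hF.exists_integrable_bound (|q₀.2| + 1)
  refine continuousAt_of_dominated (.of_forall fun q => (hF.integrable_planeWave_smul L q).1) ?_ hb
    (.of_forall fun p => ?_)
  · filter_upwards [Metric.closedBall_mem_nhds q₀ one_pos] with q hq
    refine .of_forall fun p => ?_
    rw [norm_smul, Complex.norm_exp_I_mul_ofReal, one_mul]
    exact hFb p q.2 (abs_snd_le_of_mem_closedBall hq)
  · have := hF.continuous p
    fun_prop

theorem synth_add (hF : IsSymbol μ F) (hF' : IsSymbol μ F') (q : V × ℝ) :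
    synth L μ (fun p t => F p t + F' p t) q = synth L μ F q + synth L μ F' q := by
  simp only [synth, smul_add]
  exact integral_add (hF.integrable_planeWave_smul L q) (hF'.integrable_planeWave_smul L q)

end Synthesis

section Differentiation

variable {V W E : Type*} [NormedAddCommGroup V] [NormedSpace ℝ V]
  [NormedAddCommGroup W] [NormedSpace ℝ W]
  [NormedAddCommGroup E] [NormedSpace ℂ E]
  {L : V →L[ℝ] W →L[ℝ] ℝ} {F F' F'' : W → ℝ → E}

/-- The symbol of the derivative of `synth L μ F` in the spatial direction `v`. -/
noncomputable def dirSymbol (L : V →L[ℝ] W →L[ℝ] ℝ) (v : V) (F : W → ℝ → E) (p : W) (t : ℝ) : E :=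
  (Complex.I * (L v p : ℂ)) • F p t

theorem dirSymbol_dirSymbol (v w : V) (p : W) (t : ℝ) :
    dirSymbol L v (dirSymbol L w F) p t = -((L v p : ℂ) * (L w p : ℂ)) • F p t := by
  rw [dirSymbol, dirSymbol, smul_smul, mul_mul_mul_comm, Complex.I_mul_I, neg_one_mul]

variable [NormedSpace ℝ E]

theorem dirSymbol_eq_smul_I_smul [IsScalarTower ℝ ℂ E] (v : V) (p : W) (t : ℝ) :
    dirSymbol L v F p t = L v p • Complex.I • F p t := by
  rw [dirSymbol, mul_comm, mul_smul]
  exact algebraMap_smul ℂ (L v p) (Complex.I • F p t)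

/-- The operator-valued symbol of the Fréchet derivative of `synth L μ F` on space-time, where `F'`
stands for the time derivative of `F`. -/
noncomputable def fderivSymbol (L : V →L[ℝ] W →L[ℝ] ℝ) (F F' : W → ℝ → E) (p : W) (t : ℝ) :
    V × ℝ →L[ℝ] E :=
  ((L.flip p).comp (.fst ℝ V ℝ)).smulRight (Complex.I • F p t) +
    (ContinuousLinearMap.snd ℝ V ℝ).smulRight (F' p t)

variable [IsScalarTower ℝ ℂ E]

theorem fderivSymbol_apply (p : W) (t : ℝ) (v : V × ℝ) :
    fderivSymbol L F F' p t v = dirSymbol L v.1 F p t + v.2 • F' p t := by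
  rw [dirSymbol_eq_smul_I_smul]; rfl

theorem hasDerivAt_fderivSymbol {p : W} {t : ℝ} (hd : HasDerivAt (F p) (F' p t) t)
    (hd' : HasDerivAt (F' p) (F'' p t) t) :
    HasDerivAt (fderivSymbol L F F' p) (fderivSymbol L F' F'' p t) t :=
  ((ContinuousLinearMap.smulRightL ℝ (V × ℝ) E _).hasFDerivAt.comp_hasDerivAt t
    (hd.const_smul Complex.I)).add
    ((ContinuousLinearMap.smulRightL ℝ (V × ℝ) E _).hasFDerivAt.comp_hasDerivAt t hd')

theorem hasFDerivAt_planeWave_smul {p : W} {q : V × ℝ} (hd : HasDerivAt (F p) (F' p q.2) q.2) :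
    HasFDerivAt (fun q : V × ℝ => Complex.exp (Complex.I * (L q.1 p : ℂ)) • F p q.2)
      (Complex.exp (Complex.I * (L q.1 p : ℂ)) • fderivSymbol L F F' p q.2) q := by
  have hphase : HasFDerivAt (fun q : V × ℝ => (L q.1 p : ℂ))
      (Complex.ofRealCLM.comp ((L.flip p).comp (.fst ℝ V ℝ))) q :=
    (Complex.ofRealCLM.comp ((L.flip p).comp (.fst ℝ V ℝ))).hasFDerivAt
  have hamplitude : HasFDerivAt (fun q : V × ℝ => F p q.2)
      ((ContinuousLinearMap.snd ℝ V ℝ).smulRight (F' p q.2)) q :=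
    (hd.hasFDerivAt.comp q hasFDerivAt_snd).congr_fderiv (by ext <;> simp)
  refine ((hphase.const_mul Complex.I).cexp.smul hamplitude).congr_fderiv ?_
  refine ContinuousLinearMap.ext fun v => ?_
  simp [fderivSymbol_apply, dirSymbol, smul_smul, add_comm, mul_assoc]

variable [MeasurableSpace W] [OpensMeasurableSpace W] [SecondCountableTopology W]
  {μ : Measure W}

theorem IsSymbol.dirSymbol (hF : IsSymbol μ F) (v : V) : IsSymbol μ (dirSymbol L v F) := by
  convert hF.clm_apply ((L v).smulRight (Complex.I • ContinuousLinearMap.id ℝ E)) using 3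
  exact dirSymbol_eq_smul_I_smul _ _ _

theorem IsSymbol.fderivSymbol (hF : IsSymbol μ F) (hF' : IsSymbol μ F') :
    IsSymbol μ (fderivSymbol L F F') :=
  ((hF.const_smul Complex.I).clm_apply
    ((ContinuousLinearMap.smulRightL ℝ (V × ℝ) E).comp
      (((ContinuousLinearMap.compL ℝ (V × ℝ) V ℝ).flip (.fst ℝ V ℝ)).comp L.flip))).add
    (hF'.clm_comp (ContinuousLinearMap.smulRightL ℝ (V × ℝ) E (.snd ℝ V ℝ)))

variable [μ.HasTemperateGrowth]

theorem hasFDerivAt_synth (hF : IsSymbol μ F) (hF' : IsSymbol μ F')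
    (hd : ∀ p t, HasDerivAt (F p) (F' p t) t) (q : V × ℝ) :
    HasFDerivAt (synth L μ F) (synth L μ (fderivSymbol L F F') q) q := by
  have hfderiv : IsSymbol μ (fderivSymbol L F F') := hF.fderivSymbol hF'
  obtain ⟨b, hb, hbound⟩ := hfderiv.exists_integrable_bound (|q.2| + 1)
  refine hasFDerivAt_integral_of_dominated_of_fderiv_le (Metric.closedBall_mem_nhds q one_pos)
    (.of_forall fun q => (hF.integrable_planeWave_smul L q).1) (hF.integrable_planeWave_smul L q)
    (hfderiv.integrable_planeWave_smul L q).1 (.of_forall fun p r hr => ?_) hb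
    (.of_forall fun p r _ => hasFDerivAt_planeWave_smul (hd p r.2))
  rw [norm_smul, Complex.norm_exp_I_mul_ofReal, one_mul]
  exact hbound p r.2 (abs_snd_le_of_mem_closedBall hr)

theorem contDiff_synth_two (hF : IsSymbol μ F) (hF' : IsSymbol μ F') (hF'' : IsSymbol μ F'')
    (hd : ∀ p t, HasDerivAt (F p) (F' p t) t) (hd' : ∀ p t, HasDerivAt (F' p) (F'' p t) t) :
    ContDiff ℝ 2 (synth L μ F) :=
  (contDiff_succ_iff_hasFDerivAt (n := 1)).2 ⟨_, contDiff_one_iff_hasFDerivAt.2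
    ⟨_, continuous_synth ((hF.fderivSymbol hF').fderivSymbol (hF'.fderivSymbol hF'')),
      hasFDerivAt_synth (hF.fderivSymbol hF') (hF'.fderivSymbol hF'') fun p t =>
        hasDerivAt_fderivSymbol (hd p t) (hd' p t)⟩, hasFDerivAt_synth hF hF' hd⟩

theorem synth_fderivSymbol_apply (hF : IsSymbol μ F) (hF' : IsSymbol μ F') (q v : V × ℝ) :
    synth L μ (fderivSymbol L F F') q v =
      synth L μ (fun p t => dirSymbol L v.1 F p t + v.2 • F' p t) q := by
  rw [synth, ContinuousLinearMap.integral_apply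
    ((hF.fderivSymbol (L := L) hF').integrable_planeWave_smul L q) v]
  simp only [smul_apply, fderivSymbol_apply, synth]

theorem hasDerivAt_synth_time (hF : IsSymbol μ F) (hF' : IsSymbol μ F')
    (hd : ∀ p t, HasDerivAt (F p) (F' p t) t) (x : V) (t : ℝ) :
    HasDerivAt (fun τ => synth L μ F (x, τ)) (synth L μ F' (x, t)) t := by
  have hcomp := (hasFDerivAt_synth (L := L) hF hF' hd (x, t)).comp_hasDerivAt t
    ((hasDerivAt_const t x).prodMk (hasDerivAt_id t))
  rw [synth_fderivSymbol_apply hF hF'] at hcomp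
  simpa [dirSymbol, Function.comp_def] using hcomp

/-- Only the value at time `t` enters, so the symbol may be frozen there. -/
theorem hasDerivAt_synth_space (hF : IsSymbol μ F) {γ : ℝ → V} {v : V} {s : ℝ}
    (hγ : HasDerivAt γ v s) (t : ℝ) :
    HasDerivAt (fun σ => synth L μ F (γ σ, t)) (synth L μ (dirSymbol L v F) (γ s, t)) s := by
  have hcomp := (hasFDerivAt_synth (L := L) (hF.freeze_time t) .zero
    (fun p τ => hasDerivAt_const τ (F p t)) (γ s, t)).comp_hasDerivAt s
    (hγ.prodMk (hasDerivAt_const s t))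
  rw [synth_fderivSymbol_apply (hF.freeze_time t) .zero] at hcomp
  simp only [smul_zero, add_zero] at hcomp
  exact hcomp

theorem iteratedDeriv_two_synth_time (hF : IsSymbol μ F) (hF' : IsSymbol μ F')
    (hF'' : IsSymbol μ F'') (hd : ∀ p t, HasDerivAt (F p) (F' p t) t)
    (hd' : ∀ p t, HasDerivAt (F' p) (F'' p t) t) (x : V) (t : ℝ) :
    iteratedDeriv 2 (fun τ => synth L μ F (x, τ)) t = synth L μ F'' (x, t) :=
  iteratedDeriv_two_eq_of_hasDerivAt (hasDerivAt_synth_time hF hF' hd x)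
    (hasDerivAt_synth_time hF' hF'' hd' x t)

theorem iteratedDeriv_two_synth_space (hF : IsSymbol μ F) {γ : ℝ → V} {v : V}
    (hγ : ∀ s, HasDerivAt γ v s) (s t : ℝ) :
    iteratedDeriv 2 (fun σ => synth L μ F (γ σ, t)) s =
      synth L μ (dirSymbol L v (dirSymbol L v F)) (γ s, t) :=
  iteratedDeriv_two_eq_of_hasDerivAt (fun s => hasDerivAt_synth_space hF (hγ s) t)
    (hasDerivAt_synth_space (hF.dirSymbol v) (hγ s) t)

end Differentiation

section FourierInversion

open FourierTransform SchwartzMap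

variable {V W E : Type*} [NormedAddCommGroup V] [InnerProductSpace ℝ V] [FiniteDimensional ℝ V]
  [MeasurableSpace V] [BorelSpace V] [NormedAddCommGroup E] [NormedSpace ℂ E]

theorem fourier_two_pi_inv_smul (f : V → E) (p : V) :
    𝓕 f ((2 * Real.pi)⁻¹ • p) =
      ∫ q, Complex.exp (-(Complex.I * (inner ℝ q p : ℂ))) • f q := by
  rw [Real.fourier_eq']
  refine integral_congr_ae (.of_forall fun q => ?_)
  have hpi : (Real.pi : ℂ) ≠ 0 := by exact_mod_cast Real.pi_ne_zero
  beta_reduce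
  congr 2
  rw [inner_smul_right]
  push_cast
  field_simp

theorem integral_exp_smul_fourier [CompleteSpace E] (f : 𝓢(V, E)) (x : V) :
    ∫ p, Complex.exp (Complex.I * (inner ℝ x p : ℂ)) • 𝓕 f ((2 * Real.pi)⁻¹ • p) =
      (2 * Real.pi) ^ Module.finrank ℝ V • f x := by
  have hinv : ∫ p, Complex.exp ((2 * Real.pi * inner ℝ p x : ℝ) * Complex.I) • 𝓕 f p = f x := by
    rw [← Real.fourierInv_eq', ← fourierInv_coe, FourierTransform.fourierInv_fourier_eq]
  have hscale := Measure.integral_comp_smul (volume : Measure V)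
    (fun p => Complex.exp ((2 * Real.pi * inner ℝ p x : ℝ) * Complex.I) • 𝓕 f p) (2 * Real.pi)⁻¹
  rw [hinv, abs_of_pos (by positivity), inv_pow, inv_inv] at hscale
  rw [← hscale]
  refine integral_congr_ae (.of_forall fun p => ?_)
  have hpi : (Real.pi : ℂ) ≠ 0 := by exact_mod_cast Real.pi_ne_zero
  beta_reduce
  congr 2
  rw [inner_smul_left, real_inner_comm, Real.ringHom_apply]
  push_cast
  field_simp

variable [NormedAddCommGroup W] [NormedSpace ℝ W]

/-- The Fourier transform in the angular-frequency convention `∫ exp(-i⟨q, p⟩) g(q) dq`, as a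
Schwartz function on a space `W` identified by `e` with the inner product space `V`. The
identification serves spaces, such as `ℝ × ℝ`, whose norm does not come from the inner product. -/
noncomputable def angularFourier (e : W ≃L[ℝ] V) (g : 𝓢(W, E)) : 𝓢(W, E) :=
  compCLMOfContinuousLinearEquiv ℝ
    (e.trans (.smulLeft (Units.mk0 (2 * Real.pi)⁻¹ (by positivity))))
    (𝓕 (compCLMOfContinuousLinearEquiv ℝ e.symm g))

theorem angularFourier_apply_eq_fourier (e : W ≃L[ℝ] V) (g : 𝓢(W, E)) (p : W) :
    angularFourier e g p =
      𝓕 (compCLMOfContinuousLinearEquiv ℝ e.symm g) ((2 * Real.pi)⁻¹ • e p) := rfl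

variable [MeasurableSpace W] [BorelSpace W] {μ : Measure W}

theorem angularFourier_apply (e : W ≃L[ℝ] V) (he : MeasurePreserving e μ volume) (g : 𝓢(W, E))
    (p : W) : angularFourier e g p =
      ∫ q, Complex.exp (-(Complex.I * (inner ℝ (e q) (e p) : ℂ))) • g q ∂μ := by
  rw [angularFourier_apply_eq_fourier, fourier_coe, fourier_two_pi_inv_smul,
    ← he.integral_comp e.toHomeomorph.measurableEmbedding]
  simp

theorem integral_exp_smul_angularFourier [CompleteSpace E] (e : W ≃L[ℝ] V)
    (he : MeasurePreserving e μ volume) (g : 𝓢(W, E)) (x : W) :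
    ∫ p, Complex.exp (Complex.I * (inner ℝ (e x) (e p) : ℂ)) • angularFourier e g p ∂μ =
      (2 * Real.pi) ^ Module.finrank ℝ V • g x := by
  have hinv := integral_exp_smul_fourier
    (compCLMOfContinuousLinearEquiv ℝ e.symm g) (e x)
  rw [← he.integral_comp e.toHomeomorph.measurableEmbedding] at hinv
  simpa [angularFourier_apply_eq_fourier] using hinv

end FourierInversion

section DuhamelSymbol

variable {W E : Type*} [NormedAddCommGroup W] [NormedSpace ℝ W]
  [NormedAddCommGroup E] [NormedSpace ℝ E] {k k' : W → ℝ → ℝ} {h : ℝ → ℝ} {a : W → ℝ}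

/-- The response at frequency `p` to the source `h(t) f(p)`, through the propagator `k p` and with
the polarization weight `a p`. -/
noncomputable def duhamelSymbol (a : W → ℝ) (k : W → ℝ → ℝ) (h : ℝ → ℝ) (f : SchwartzMap W E)
    (p : W) (t : ℝ) : E :=
  (a p * duhamel (k p) h t) • f p

theorem duhamelSymbol_const_smul {f : SchwartzMap W ℂ} (c : ℂ) (p : W) (t : ℝ) :
    duhamelSymbol a k h (c • f) p t = c • duhamelSymbol a k h f p t :=
  smul_comm (a p * duhamel (k p) h t) c (f p)

theorem hasDerivAt_duhamelSymbol (hk : ∀ p τ, HasDerivAt (k p) (k' p τ) τ)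
    (hk' : ∀ p, Continuous (k' p)) (hh : Continuous h) (f : SchwartzMap W E) (p : W) (t : ℝ) :
    HasDerivAt (duhamelSymbol a k h f p)
      ((a p * k p 0 * h t) • f p + duhamelSymbol a k' h f p t) t := by
  refine (((hasDerivAt_duhamel (hk p) (hk' p) hh t).const_mul (a p)).smul_const
    (f p)).congr_deriv ?_
  rw [duhamelSymbol, ← add_smul, smul_eq_mul, mul_add, mul_assoc]

variable [MeasurableSpace W] [OpensMeasurableSpace W] [SecondCountableTopology W]
  {μ : Measure W}

theorem isSymbol_duhamelSymbol {B : ℝ → ℝ} (hk_meas : Measurable (Function.uncurry k))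
    (hk_cont : ∀ p, Continuous (k p)) (hk_bdd : ∀ T p τ, |τ| ≤ T → |k p τ| ≤ B T)
    (ha_meas : Measurable a) (ha_bdd : ∀ p, |a p| ≤ 1) (hh : Continuous h) (f : SchwartzMap W E) :
    IsSymbol μ (duhamelSymbol a k h f) := by
  refine (IsSymbol.of_schwartz f).smul_of_bounded
    (fun t => ha_meas.mul (measurable_duhamel hk_meas hh.measurable t))
    (fun p => continuous_const.mul (continuous_duhamel (hk_cont p) hh)) fun T => ?_
  obtain ⟨A, hA⟩ := isCompact_Icc.exists_bound_of_continuousOn hh.continuousOn (s := Set.Icc (-T) T)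
  refine ⟨B T * A * T, fun p t ht => ?_⟩
  have hduhamel : ‖duhamel (k p) h t‖ ≤ B T * A * T :=
    norm_duhamel_le (hk_bdd T p) (fun s hs => hA s (abs_le.1 hs)) ht
  rw [abs_mul]
  exact (mul_le_of_le_one_left (abs_nonneg _) (ha_bdd p)).trans hduhamel

theorem isSymbol_source (hh : Continuous h) (f : SchwartzMap W E) :
    IsSymbol μ fun p t => h t • f p :=
  (IsSymbol.of_schwartz f).smul_of_bounded (fun _ => measurable_const) (fun _ => hh) fun T => by
    obtain ⟨A, hA⟩ := isCompact_Icc.exists_bound_of_continuousOn hh.continuousOn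
      (s := Set.Icc (-T) T)
    exact ⟨A, fun _ t ht => hA t (abs_le.1 ht)⟩

end DuhamelSymbol

section WaveKernel

/-- The propagator `sin(ωτ)/ω` of the oscillator `y'' + ω²y = 0`, written with the cardinal sine so
that it takes its limiting value `τ` at `ω = 0`. -/
noncomputable def waveKernel (ω τ : ℝ) : ℝ := τ * Real.sinc (ω * τ)

theorem waveKernel_zero_time (ω : ℝ) : waveKernel ω 0 = 0 := zero_mul _

theorem waveKernel_zero_frequency (τ : ℝ) : waveKernel 0 τ = τ := by simp [waveKernel]

theorem mul_waveKernel (ω τ : ℝ) : ω * waveKernel ω τ = Real.sin (ω * τ) := by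
  rcases eq_or_ne (ω * τ) 0 with h | h
  · rw [waveKernel, ← mul_assoc, h, zero_mul, Real.sin_zero]
  · rw [waveKernel, Real.sinc_of_ne_zero h, ← mul_assoc, mul_div_cancel₀ _ h]

theorem waveKernel_of_ne_zero {ω : ℝ} (hω : ω ≠ 0) (τ : ℝ) :
    waveKernel ω τ = Real.sin (ω * τ) / ω := by
  rw [← mul_waveKernel, mul_div_cancel_left₀ _ hω]

theorem continuous_waveKernel : Continuous (Function.uncurry waveKernel) :=
  continuous_snd.mul (Real.continuous_sinc.comp (by fun_prop))

theorem abs_waveKernel_le (ω τ : ℝ) : |waveKernel ω τ| ≤ |τ| := by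
  rw [waveKernel, abs_mul]
  exact mul_le_of_le_one_right (abs_nonneg _) (Real.abs_sinc_le_one _)

/-- The time derivative of `waveKernel`, which propagates velocities. -/
noncomputable def cosKernel (ω τ : ℝ) : ℝ := Real.cos (ω * τ)

theorem cosKernel_zero_time (ω : ℝ) : cosKernel ω 0 = 1 := by simp [cosKernel]

theorem continuous_cosKernel : Continuous (Function.uncurry cosKernel) :=
  Real.continuous_cos.comp (continuous_fst.mul continuous_snd)

theorem abs_cosKernel_le_one (ω τ : ℝ) : |cosKernel ω τ| ≤ 1 := Real.abs_cos_le_one _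

theorem hasDerivAt_waveKernel (ω τ : ℝ) : HasDerivAt (waveKernel ω) (cosKernel ω τ) τ := by
  rcases eq_or_ne ω 0 with rfl | hω
  · rw [funext waveKernel_zero_frequency, cosKernel, zero_mul, Real.cos_zero]
    exact hasDerivAt_id τ
  · rw [funext (waveKernel_of_ne_zero hω)]
    refine ((((hasDerivAt_id τ).const_mul ω).sin).div_const ω).congr_deriv ?_
    simp [cosKernel, hω]

theorem hasDerivAt_cosKernel (ω τ : ℝ) :
    HasDerivAt (cosKernel ω) (-ω ^ 2 * waveKernel ω τ) τ := by
  refine ((hasDerivAt_id τ).const_mul ω).cos.congr_deriv ?_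
  rw [id, ← mul_waveKernel]
  ring

theorem continuous_waveKernel_apply (ω : ℝ) : Continuous (waveKernel ω) :=
  continuous_waveKernel.uncurry_left ω

theorem continuous_cosKernel_apply (ω : ℝ) : Continuous (cosKernel ω) :=
  continuous_cosKernel.uncurry_left ω

end WaveKernel

section Elastic

/-- The Euclidean length of a frequency; the norm of `ℝ × ℝ` is the maximum norm. -/
noncomputable def freqNorm (p : ℝ × ℝ) : ℝ := Real.sqrt (p.1 ^ 2 + p.2 ^ 2)

theorem freqNorm_sq (p : ℝ × ℝ) : freqNorm p ^ 2 = p.1 ^ 2 + p.2 ^ 2 :=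
  Real.sq_sqrt (by positivity)

theorem continuous_freqNorm : Continuous freqNorm := by
  unfold freqNorm; fun_prop

theorem freqNorm_zero : freqNorm 0 = 0 := by simp [freqNorm]

theorem freqNorm_eq_zero {p : ℝ × ℝ} : freqNorm p = 0 ↔ p = 0 := by
  refine ⟨fun hp => ?_, fun hp => by simp [hp, freqNorm]⟩
  have hsq := freqNorm_sq p
  rw [hp] at hsq
  ext <;> simp only [Prod.fst_zero, Prod.snd_zero] <;> nlinarith [sq_nonneg p.1, sq_nonneg p.2]

/-- The mixed entry `ξη/r²` of the orthogonal projection onto the frequency direction, which is the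
polarization of pressure waves; its junk value at the origin is `0`. -/
noncomputable def crossProj (p : ℝ × ℝ) : ℝ := p.1 * p.2 / freqNorm p ^ 2

/-- The vertical entry `η²/r²` of the orthogonal projection onto the frequency direction; its junk
value at the origin is `0`. -/
noncomputable def vertProj (p : ℝ × ℝ) : ℝ := p.2 ^ 2 / freqNorm p ^ 2

theorem div_freqNorm_sq_mul {p : ℝ × ℝ} {b : ℝ} (hb : p = 0 → b = 0) :
    b / freqNorm p ^ 2 * (p.1 ^ 2 + p.2 ^ 2) = b := by
  rw [← freqNorm_sq]
  refine div_mul_cancel_of_imp fun hp => hb (freqNorm_eq_zero.1 ?_)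
  simpa using hp

theorem crossProj_mul (p : ℝ × ℝ) : crossProj p * (p.1 ^ 2 + p.2 ^ 2) = p.1 * p.2 :=
  div_freqNorm_sq_mul fun hp => by simp [hp]

theorem vertProj_mul (p : ℝ × ℝ) : vertProj p * (p.1 ^ 2 + p.2 ^ 2) = p.2 ^ 2 :=
  div_freqNorm_sq_mul fun hp => by simp [hp]

theorem fst_mul_vertProj (p : ℝ × ℝ) : p.1 * vertProj p = p.2 * crossProj p := by
  rw [vertProj, crossProj]; ring

theorem abs_div_freqNorm_sq_le_one {p : ℝ × ℝ} {b : ℝ} (hb : |b| ≤ p.1 ^ 2 + p.2 ^ 2) :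
    |b / freqNorm p ^ 2| ≤ 1 := by
  rw [abs_div, abs_sq, freqNorm_sq]
  exact div_le_one_of_le₀ hb (by positivity)

theorem abs_crossProj_le_one (p : ℝ × ℝ) : |crossProj p| ≤ 1 :=
  abs_div_freqNorm_sq_le_one (by
    rw [abs_le]; constructor <;> nlinarith [sq_nonneg (p.1 + p.2), sq_nonneg (p.1 - p.2)])

theorem vertProj_mem_Icc (p : ℝ × ℝ) : vertProj p ∈ Set.Icc 0 1 := by
  refine ⟨by unfold vertProj; positivity, (le_abs_self _).trans (abs_div_freqNorm_sq_le_one ?_)⟩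
  rw [abs_sq]
  nlinarith [sq_nonneg p.1]

theorem measurable_crossProj : Measurable crossProj :=
  (measurable_fst.mul measurable_snd).div (continuous_freqNorm.measurable.pow_const 2)

theorem measurable_vertProj : Measurable vertProj :=
  (measurable_snd.pow_const 2).div (continuous_freqNorm.measurable.pow_const 2)

end Elastic

section ElasticSymbol

variable {K K' : ℝ → ℝ → ℝ} {cl cs : ℝ} {a b : ℝ × ℝ → ℝ} {h : ℝ → ℝ} {f : SchwartzMap (ℝ × ℝ) ℂ}

/-- The sum of the responses to the source `h(t) f(p)` in the pressure mode, of polarization weight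
`a` and frequency `cl |p|`, and in the shear mode, of weight `b` and frequency `cs |p|`; the
oscillator of frequency `ω` has the propagator `K ω`. -/
noncomputable def elasticSymbol (K : ℝ → ℝ → ℝ) (cl cs : ℝ) (a b : ℝ × ℝ → ℝ) (h : ℝ → ℝ)
    (f : SchwartzMap (ℝ × ℝ) ℂ) (p : ℝ × ℝ) (t : ℝ) : ℂ :=
  duhamelSymbol a (fun p => K (cl * freqNorm p)) h f p t +
    duhamelSymbol b (fun p => K (cs * freqNorm p)) h f p t

theorem elasticSymbol_zero_time (p : ℝ × ℝ) : elasticSymbol K cl cs a b h f p 0 = 0 := by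
  simp [elasticSymbol, duhamelSymbol]

theorem elasticSymbol_const_smul (c : ℂ) :
    elasticSymbol K cl cs a b h (c • f) = fun p t => c • elasticSymbol K cl cs a b h f p t := by
  funext p t
  simp only [elasticSymbol, duhamelSymbol_const_smul, smul_add]

theorem elasticSymbol_eq_integral (hK : ∀ ω, Continuous (K ω)) (hh : Continuous h) (p : ℝ × ℝ)
    (t : ℝ) : elasticSymbol K cl cs a b h f p t =
      ∫ s in (0 : ℝ)..t, (((a p * K (cl * freqNorm p) (t - s) +
        b p * K (cs * freqNorm p) (t - s)) * h s : ℝ) : ℂ) * f p := by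
  have hsum := duhamel_add ((hK (cl * freqNorm p)).const_mul (a p))
    ((hK (cs * freqNorm p)).const_mul (b p)) hh t
  rw [duhamel_const_mul, duhamel_const_mul, smul_eq_mul, smul_eq_mul] at hsum
  rw [elasticSymbol, duhamelSymbol, duhamelSymbol, ← add_smul, ← hsum, Complex.real_smul, duhamel,
    ← intervalIntegral.integral_ofReal, intervalIntegral.integral_mul_const]
  rfl

theorem hasDerivAt_elasticSymbol (hK : ∀ ω τ, HasDerivAt (K ω) (K' ω τ) τ)
    (hK' : ∀ ω, Continuous (K' ω)) (hh : Continuous h) (p : ℝ × ℝ) (t : ℝ) :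
    HasDerivAt (elasticSymbol K cl cs a b h f p)
      (((a p * K (cl * freqNorm p) 0 + b p * K (cs * freqNorm p) 0) * h t) • f p +
        elasticSymbol K' cl cs a b h f p t) t := by
  refine ((hasDerivAt_duhamelSymbol (fun _ => hK _) (fun _ => hK' _) hh f p t).add
    (hasDerivAt_duhamelSymbol (fun _ => hK _) (fun _ => hK' _) hh f p t)).congr_deriv ?_
  rw [elasticSymbol, add_mul, add_smul]
  abel

theorem isSymbol_elasticSymbol {B : ℝ → ℝ} (hK : Continuous (Function.uncurry K))
    (hK_bdd : ∀ T ω τ, |τ| ≤ T → |K ω τ| ≤ B T) (ha : Measurable a) (ha_bdd : ∀ p, |a p| ≤ 1)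
    (hb : Measurable b) (hb_bdd : ∀ p, |b p| ≤ 1) (hh : Continuous h) :
    IsSymbol volume (elasticSymbol K cl cs a b h f) := by
  have hmode (c : ℝ) : Continuous (Function.uncurry fun p => K (c * freqNorm p)) :=
    hK.comp (((continuous_freqNorm.comp continuous_fst).const_mul c).prodMk continuous_snd)
  have hmode_time (c : ℝ) (p : ℝ × ℝ) : Continuous (K (c * freqNorm p)) :=
    (hmode c).comp (continuous_const.prodMk continuous_id)
  exact (isSymbol_duhamelSymbol (hmode cl).measurable (hmode_time cl) (fun T _ => hK_bdd T _)
    ha ha_bdd hh f).add (isSymbol_duhamelSymbol (hmode cs).measurable (hmode_time cs)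
      (fun T _ => hK_bdd T _) hb hb_bdd hh f)

theorem hasDerivAt_elasticSymbol_waveKernel (hh : Continuous h) (p : ℝ × ℝ) (t : ℝ) :
    HasDerivAt (elasticSymbol waveKernel cl cs a b h f p)
      (elasticSymbol cosKernel cl cs a b h f p t) t := by
  refine (hasDerivAt_elasticSymbol hasDerivAt_waveKernel continuous_cosKernel_apply hh p
    t).congr_deriv ?_
  simp [waveKernel_zero_time]

theorem hasDerivAt_elasticSymbol_cosKernel (hh : Continuous h) (p : ℝ × ℝ) (t : ℝ) :
    HasDerivAt (elasticSymbol cosKernel cl cs a b h f p)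
      (((a p + b p) * h t) • f p -
        ((cl * freqNorm p) ^ 2 * (a p * duhamel (waveKernel (cl * freqNorm p)) h t) +
          (cs * freqNorm p) ^ 2 * (b p * duhamel (waveKernel (cs * freqNorm p)) h t)) • f p) t := by
  refine (hasDerivAt_elasticSymbol hasDerivAt_cosKernel
    (fun ω => (continuous_waveKernel_apply ω).const_mul _) hh p t).congr_deriv ?_
  simp only [elasticSymbol, duhamelSymbol, duhamel_const_mul, cosKernel_zero_time, smul_eq_mul,
    ← add_smul, ← sub_smul]
  congr 1
  ring

end ElasticSymbol

section PlaneStrain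

variable {W E : Type*} [NormedAddCommGroup W] [NormedSpace ℝ W] [NormedAddCommGroup E]
  [NormedSpace ℝ E] [NormedSpace ℂ E] {L : (ℝ × ℝ) →L[ℝ] W →L[ℝ] ℝ} {F F' G S : W → ℝ → E}

/-- The symbol of `c₁ ∂₁∂₁u + c₂ ∂₂∂₂u + c₁₂ ∂₁∂₂v + s` on the plane; `u`, `v` and `s` have the
symbols `F`, `G` and `S`. -/
noncomputable def forceSymbol (L : (ℝ × ℝ) →L[ℝ] W →L[ℝ] ℝ) (c₁ c₂ c₁₂ : ℂ) (F G S : W → ℝ → E)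
    (p : W) (t : ℝ) : E :=
  c₁ • dirSymbol L (1, 0) (dirSymbol L (1, 0) F) p t +
    c₂ • dirSymbol L (0, 1) (dirSymbol L (0, 1) F) p t +
    c₁₂ • dirSymbol L (1, 0) (dirSymbol L (0, 1) G) p t + S p t

variable [IsScalarTower ℝ ℂ E] [MeasurableSpace W] [OpensMeasurableSpace W]
  [SecondCountableTopology W] {μ : Measure W}

theorem isSymbol_forceSymbol (hF : IsSymbol μ F) (hG : IsSymbol μ G) (hS : IsSymbol μ S)
    (c₁ c₂ c₁₂ : ℂ) : IsSymbol μ (forceSymbol L c₁ c₂ c₁₂ F G S) :=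
  ((((hF.dirSymbol _).dirSymbol _).const_smul c₁).add
    (((hF.dirSymbol _).dirSymbol _).const_smul c₂)).add
    (((hG.dirSymbol _).dirSymbol _).const_smul c₁₂) |>.add hS

variable [μ.HasTemperateGrowth]

theorem synth_forceSymbol (hF : IsSymbol μ F) (hG : IsSymbol μ G) (hS : IsSymbol μ S)
    (c₁ c₂ c₁₂ : ℂ) (x y t : ℝ) :
    synth L μ (forceSymbol L c₁ c₂ c₁₂ F G S) ((x, y), t) =
      c₁ • iteratedDeriv 2 (fun x' => synth L μ F ((x', y), t)) x +
        c₂ • iteratedDeriv 2 (fun y' => synth L μ F ((x, y'), t)) y +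
        c₁₂ • deriv (fun x' => deriv (fun y' => synth L μ G ((x', y'), t)) y) x +
        synth L μ S ((x, y), t) := by
  have hline₁ (y x : ℝ) : HasDerivAt (fun x' : ℝ => (x', y)) (1, 0) x :=
    (hasDerivAt_id x).prodMk (hasDerivAt_const x y)
  have hline₂ (x y : ℝ) : HasDerivAt (fun y' : ℝ => (x, y')) (0, 1) y :=
    (hasDerivAt_const y x).prodMk (hasDerivAt_id y)
  have hmixed : deriv (fun x' => deriv (fun y' => synth L μ G ((x', y'), t)) y) x =
      synth L μ (dirSymbol L (1, 0) (dirSymbol L (0, 1) G)) ((x, y), t) := by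
    simp only [fun x' => (hasDerivAt_synth_space (L := L) hG (hline₂ x' y) t).deriv]
    exact (hasDerivAt_synth_space (hG.dirSymbol _) (hline₁ y x) t).deriv
  have h₁ := ((hF.dirSymbol (L := L) (1, 0)).dirSymbol (L := L) (1, 0)).const_smul c₁
  have h₂ := ((hF.dirSymbol (L := L) (0, 1)).dirSymbol (L := L) (0, 1)).const_smul c₂
  have h₁₂ := ((hG.dirSymbol (L := L) (0, 1)).dirSymbol (L := L) (1, 0)).const_smul c₁₂
  rw [iteratedDeriv_two_synth_space hF (hline₁ y), iteratedDeriv_two_synth_space hF (hline₂ x),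
    hmixed, ← synth_const_smul, ← synth_const_smul, ← synth_const_smul, ← synth_add h₁ h₂,
    ← synth_add (h₁.add h₂) h₁₂, ← synth_add ((h₁.add h₂).add h₁₂) hS]
  rfl

theorem contDiff_synth_of_hasDerivAt_forceSymbol {c₁ c₂ c₁₂ : ℂ} (hF : IsSymbol μ F)
    (hF' : IsSymbol μ F') (hG : IsSymbol μ G) (hS : IsSymbol μ S)
    (hd : ∀ p t, HasDerivAt (F p) (F' p t) t)
    (hd' : ∀ p t, HasDerivAt (F' p) (forceSymbol L c₁ c₂ c₁₂ F G S p t) t) :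
    ContDiff ℝ 2 (synth L μ F) :=
  contDiff_synth_two hF hF' (isSymbol_forceSymbol hF hG hS c₁ c₂ c₁₂) hd hd'

theorem iteratedDeriv_two_synth_of_hasDerivAt_forceSymbol {c₁ c₂ c₁₂ : ℂ} (hF : IsSymbol μ F)
    (hF' : IsSymbol μ F') (hG : IsSymbol μ G) (hS : IsSymbol μ S)
    (hd : ∀ p t, HasDerivAt (F p) (F' p t) t)
    (hd' : ∀ p t, HasDerivAt (F' p) (forceSymbol L c₁ c₂ c₁₂ F G S p t) t) (x y t : ℝ) :
    iteratedDeriv 2 (fun τ => synth L μ F ((x, y), τ)) t =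
      c₁ • iteratedDeriv 2 (fun x' => synth L μ F ((x', y), t)) x +
        c₂ • iteratedDeriv 2 (fun y' => synth L μ F ((x, y'), t)) y +
        c₁₂ • deriv (fun x' => deriv (fun y' => synth L μ G ((x', y'), t)) y) x +
        synth L μ S ((x, y), t) :=
  (iteratedDeriv_two_synth_time hF hF' (isSymbol_forceSymbol hF hG hS c₁ c₂ c₁₂) hd hd' (x, y)
    t).trans (synth_forceSymbol hF hG hS c₁ c₂ c₁₂ x y t)

end PlaneStrain

section PlaneFourier

/-- The Euclidean inner product on `ℝ × ℝ`, which carries the maximum norm. -/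
noncomputable def planeDot : (ℝ × ℝ) →L[ℝ] (ℝ × ℝ) →L[ℝ] ℝ :=
  (ContinuousLinearMap.mul ℝ ℝ).bilinearComp (.fst ℝ ℝ ℝ) (.fst ℝ ℝ ℝ) +
    (ContinuousLinearMap.mul ℝ ℝ).bilinearComp (.snd ℝ ℝ ℝ) (.snd ℝ ℝ ℝ)

theorem planeDot_apply (x p : ℝ × ℝ) : planeDot x p = x.1 * p.1 + x.2 * p.2 := rfl

theorem inner_equivRealProdCLM_symm (x p : ℝ × ℝ) :
    inner ℝ (Complex.equivRealProdCLM.symm x) (Complex.equivRealProdCLM.symm p) =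
      planeDot x p := by
  simp [Complex.inner, planeDot_apply, mul_comm]

/-- The Fourier transform of a real Schwartz function on the plane, in the angular-frequency
convention. -/
noncomputable def planeFourier (g : SchwartzMap (ℝ × ℝ) ℝ) : SchwartzMap (ℝ × ℝ) ℂ :=
  angularFourier Complex.equivRealProdCLM.symm (g.postcompCLM Complex.ofRealCLM)

theorem planeFourier_apply (g : SchwartzMap (ℝ × ℝ) ℝ) (p : ℝ × ℝ) :
    planeFourier g p =
      ∫ q, Complex.exp (-(Complex.I * (planeDot q p : ℂ))) * (g q : ℂ) := by
  rw [planeFourier, angularFourier_apply _ Complex.volume_preserving_equiv_real_prod.symm]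
  simp only [inner_equivRealProdCLM_symm]
  rfl

theorem synth_planeFourier (g : SchwartzMap (ℝ × ℝ) ℝ) (x : ℝ × ℝ) (t : ℝ) :
    synth planeDot volume (fun p _ => planeFourier g p) (x, t) =
      (((2 * Real.pi) ^ 2 : ℝ) : ℂ) * g x := by
  have hinv := integral_exp_smul_angularFourier Complex.equivRealProdCLM.symm
    Complex.volume_preserving_equiv_real_prod.symm (g.postcompCLM Complex.ofRealCLM) x
  simp only [inner_equivRealProdCLM_symm, Complex.finrank_real_complex] at hinv
  exact hinv

theorem synth_source_planeFourier (g : SchwartzMap (ℝ × ℝ) ℝ) (h : ℝ → ℝ) (x : ℝ × ℝ) (t : ℝ) :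
    synth planeDot volume
      (fun p t => h t • ((((2 * Real.pi) ^ 2 : ℝ) : ℂ)⁻¹ • planeFourier g) p) (x, t) =
        (g x * h t : ℝ) := by
  have hpi : (((2 * Real.pi) ^ 2 : ℝ) : ℂ) ≠ 0 := by exact_mod_cast (by positivity)
  calc
    _ = synth planeDot volume
        (fun p _ => (h t * (((2 * Real.pi) ^ 2 : ℝ) : ℂ)⁻¹) • planeFourier g p) (x, t) := by
      simp only [synth, mul_smul]
      rfl
    _ = (g x * h t : ℝ) := by
      rw [synth_const_smul, synth_planeFourier, smul_eq_mul, mul_assoc, inv_mul_cancel_left₀ hpi,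
        Complex.ofReal_mul, mul_comm]

end PlaneFourier

section Displacement

variable {K : ℝ → ℝ → ℝ} {cl cs : ℝ} {a b : ℝ × ℝ → ℝ} {h : ℝ → ℝ} {f : SchwartzMap (ℝ × ℝ) ℂ}

/-- The symbol of the horizontal component generated by the vertical source `h(t) f(p)`: the
displacement `û₁` for `K = waveKernel`, its velocity for `K = cosKernel`. -/
noncomputable def horizontalSymbol (K : ℝ → ℝ → ℝ) (cl cs : ℝ) (h : ℝ → ℝ)
    (f : SchwartzMap (ℝ × ℝ) ℂ) : ℝ × ℝ → ℝ → ℂ :=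
  elasticSymbol K cl cs crossProj (-crossProj) h f

/-- The symbol of the vertical component generated by the vertical source `h(t) f(p)`: the
displacement `û₂` for `K = waveKernel`, its velocity for `K = cosKernel`. -/
noncomputable def verticalSymbol (K : ℝ → ℝ → ℝ) (cl cs : ℝ) (h : ℝ → ℝ)
    (f : SchwartzMap (ℝ × ℝ) ℂ) : ℝ × ℝ → ℝ → ℂ :=
  elasticSymbol K cl cs vertProj (1 - vertProj) h f

theorem isSymbol_horizontalSymbol {B : ℝ → ℝ} (hK : Continuous (Function.uncurry K))
    (hK_bdd : ∀ T ω τ, |τ| ≤ T → |K ω τ| ≤ B T) (hh : Continuous h) :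
    IsSymbol volume (horizontalSymbol K cl cs h f) :=
  isSymbol_elasticSymbol hK hK_bdd measurable_crossProj abs_crossProj_le_one
    measurable_crossProj.neg (fun p => (abs_neg _).trans_le (abs_crossProj_le_one p)) hh

theorem isSymbol_verticalSymbol {B : ℝ → ℝ} (hK : Continuous (Function.uncurry K))
    (hK_bdd : ∀ T ω τ, |τ| ≤ T → |K ω τ| ≤ B T) (hh : Continuous h) :
    IsSymbol volume (verticalSymbol K cl cs h f) :=
  isSymbol_elasticSymbol hK hK_bdd measurable_vertProj
    (fun p => abs_le.2 ⟨neg_one_lt_zero.le.trans (vertProj_mem_Icc p).1, (vertProj_mem_Icc p).2⟩)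
    (measurable_const.sub measurable_vertProj)
    (fun p => by
      obtain ⟨hnonneg, hle⟩ := vertProj_mem_Icc p
      rw [Pi.sub_apply, Pi.one_apply, abs_le]
      constructor <;> linarith) hh

theorem isSymbol_horizontalSymbol_waveKernel (hh : Continuous h) :
    IsSymbol volume (horizontalSymbol waveKernel cl cs h f) :=
  isSymbol_horizontalSymbol continuous_waveKernel (fun _ ω τ => (abs_waveKernel_le ω τ).trans) hh

theorem isSymbol_horizontalSymbol_cosKernel (hh : Continuous h) :
    IsSymbol volume (horizontalSymbol cosKernel cl cs h f) :=
  isSymbol_horizontalSymbol continuous_cosKernel (fun _ ω τ _ => abs_cosKernel_le_one ω τ) hh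

theorem isSymbol_verticalSymbol_waveKernel (hh : Continuous h) :
    IsSymbol volume (verticalSymbol waveKernel cl cs h f) :=
  isSymbol_verticalSymbol continuous_waveKernel (fun _ ω τ => (abs_waveKernel_le ω τ).trans) hh

theorem isSymbol_verticalSymbol_cosKernel (hh : Continuous h) :
    IsSymbol volume (verticalSymbol cosKernel cl cs h f) :=
  isSymbol_verticalSymbol continuous_cosKernel (fun _ ω τ _ => abs_cosKernel_le_one ω τ) hh

theorem hasDerivAt_horizontalSymbol_cosKernel (hh : Continuous h) (p : ℝ × ℝ) (t : ℝ) :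
    HasDerivAt (horizontalSymbol cosKernel cl cs h f p)
      (forceSymbol planeDot ((cl : ℂ) ^ 2) ((cs : ℂ) ^ 2) ((cl : ℂ) ^ 2 - (cs : ℂ) ^ 2)
        (horizontalSymbol waveKernel cl cs h f) (verticalSymbol waveKernel cl cs h f)
        (fun _ _ => 0) p t) t := by
  refine (hasDerivAt_elasticSymbol_cosKernel hh p t).congr_deriv ?_
  have hcross : (crossProj p : ℂ) * (p.1 ^ 2 + p.2 ^ 2) = p.1 * p.2 := by
    exact_mod_cast crossProj_mul p
  have hparallel : (p.1 : ℂ) * vertProj p = p.2 * crossProj p := by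
    exact_mod_cast fst_mul_vertProj p
  simp only [forceSymbol, dirSymbol_dirSymbol, planeDot_apply, horizontalSymbol, verticalSymbol,
    elasticSymbol, duhamelSymbol, Complex.real_smul, smul_eq_mul, mul_pow, freqNorm_sq,
    Pi.neg_apply, Pi.sub_apply, Pi.one_apply]
  generalize duhamel (waveKernel (cl * freqNorm p)) h t = pressure
  generalize duhamel (waveKernel (cs * freqNorm p)) h t = shear
  push_cast
  linear_combination ((cl : ℂ) ^ 2 - (cs : ℂ) ^ 2) * f p *
    (p.2 * (pressure - shear) * hparallel - shear * hcross)

theorem hasDerivAt_verticalSymbol_cosKernel (hh : Continuous h) (p : ℝ × ℝ) (t : ℝ) :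
    HasDerivAt (verticalSymbol cosKernel cl cs h f p)
      (forceSymbol planeDot ((cs : ℂ) ^ 2) ((cl : ℂ) ^ 2) ((cl : ℂ) ^ 2 - (cs : ℂ) ^ 2)
        (verticalSymbol waveKernel cl cs h f) (horizontalSymbol waveKernel cl cs h f)
        (fun p t => h t • f p) p t) t := by
  refine (hasDerivAt_elasticSymbol_cosKernel hh p t).congr_deriv ?_
  have hparallel : (p.1 : ℂ) * vertProj p = p.2 * crossProj p := by
    exact_mod_cast fst_mul_vertProj p
  have hvert : (vertProj p : ℂ) * (p.1 ^ 2 + p.2 ^ 2) = p.2 ^ 2 := by exact_mod_cast vertProj_mul p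
  simp only [forceSymbol, dirSymbol_dirSymbol, planeDot_apply, horizontalSymbol, verticalSymbol,
    elasticSymbol, duhamelSymbol, Complex.real_smul, smul_eq_mul, mul_pow, freqNorm_sq,
    Pi.neg_apply, Pi.sub_apply, Pi.one_apply]
  generalize duhamel (waveKernel (cl * freqNorm p)) h t = pressure
  generalize duhamel (waveKernel (cs * freqNorm p)) h t = shear
  push_cast
  linear_combination ((cl : ℂ) ^ 2 - (cs : ℂ) ^ 2) * f p *
    (-p.1 * (pressure - shear) * hparallel - shear * hvert)

theorem eq_horizontalSymbol (hcl : cl ≠ 0) (hcs : cs ≠ 0) (hh : Continuous h)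
    {uhat : ℝ × ℝ → ℝ → ℂ} (h_zero : ∀ t, uhat 0 t = 0)
    (h_ne_zero : ∀ p : ℝ × ℝ, p ≠ 0 → ∀ t, uhat p t = ∫ s in (0 : ℝ)..t,
      (((Real.sin (cl * (t - s) * freqNorm p) / (cl * freqNorm p) -
        Real.sin (cs * (t - s) * freqNorm p) / (cs * freqNorm p)) *
          (p.1 * p.2 / freqNorm p ^ 2) * h s : ℝ) : ℂ) * f p) :
    uhat = horizontalSymbol waveKernel cl cs h f := by
  funext p t
  rcases eq_or_ne p 0 with rfl | hp
  · simp [h_zero, horizontalSymbol, elasticSymbol, duhamelSymbol, crossProj]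
  have hr : freqNorm p ≠ 0 := mt freqNorm_eq_zero.1 hp
  rw [h_ne_zero p hp, horizontalSymbol, elasticSymbol_eq_integral continuous_waveKernel_apply hh]
  simp only [waveKernel_of_ne_zero (mul_ne_zero hcl hr), waveKernel_of_ne_zero (mul_ne_zero hcs hr),
    mul_right_comm _ (freqNorm p), Pi.neg_apply]
  congr! 5 with s
  rw [crossProj]
  ring

theorem eq_verticalSymbol (hcl : cl ≠ 0) (hcs : cs ≠ 0) (hh : Continuous h)
    {uhat : ℝ × ℝ → ℝ → ℂ}
    (h_zero : ∀ t, uhat 0 t = f 0 * ∫ s in (0 : ℝ)..t, (((t - s) * h s : ℝ) : ℂ))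
    (h_ne_zero : ∀ p : ℝ × ℝ, p ≠ 0 → ∀ t, uhat p t = ∫ s in (0 : ℝ)..t,
      (((Real.sin (cl * (t - s) * freqNorm p) / (cl * freqNorm p) * (p.2 ^ 2 / freqNorm p ^ 2) +
        Real.sin (cs * (t - s) * freqNorm p) / (cs * freqNorm p) * (p.1 ^ 2 / freqNorm p ^ 2)) *
          h s : ℝ) : ℂ) * f p) :
    uhat = verticalSymbol waveKernel cl cs h f := by
  funext p t
  rw [verticalSymbol, elasticSymbol_eq_integral continuous_waveKernel_apply hh]
  rcases eq_or_ne p 0 with rfl | hp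
  · simp [h_zero, freqNorm_zero, waveKernel_zero_frequency, vertProj, mul_comm]
  have hr : freqNorm p ≠ 0 := mt freqNorm_eq_zero.1 hp
  have hhoriz : p.1 ^ 2 / freqNorm p ^ 2 = 1 - vertProj p := by
    rw [vertProj, eq_sub_iff_add_eq, ← add_div, ← freqNorm_sq, div_self (pow_ne_zero 2 hr)]
  simp only [h_ne_zero p hp, waveKernel_of_ne_zero (mul_ne_zero hcl hr),
    waveKernel_of_ne_zero (mul_ne_zero hcs hr), mul_right_comm _ (freqNorm p), hhoriz,
    Pi.sub_apply, Pi.one_apply]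
  congr! 5 with s
  rw [vertProj]
  ring

theorem contDiff_synth_horizontalSymbol (hh : Continuous h) :
    ContDiff ℝ 2 (synth planeDot volume (horizontalSymbol waveKernel cl cs h f)) :=
  contDiff_synth_of_hasDerivAt_forceSymbol (isSymbol_horizontalSymbol_waveKernel hh)
    (isSymbol_horizontalSymbol_cosKernel hh) (isSymbol_verticalSymbol_waveKernel hh) .zero
    (hasDerivAt_elasticSymbol_waveKernel hh) (hasDerivAt_horizontalSymbol_cosKernel hh)

theorem contDiff_synth_verticalSymbol (hh : Continuous h) :
    ContDiff ℝ 2 (synth planeDot volume (verticalSymbol waveKernel cl cs h f)) :=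
  contDiff_synth_of_hasDerivAt_forceSymbol (isSymbol_verticalSymbol_waveKernel hh)
    (isSymbol_verticalSymbol_cosKernel hh) (isSymbol_horizontalSymbol_waveKernel hh)
    (isSymbol_source hh f) (hasDerivAt_elasticSymbol_waveKernel hh)
    (hasDerivAt_verticalSymbol_cosKernel hh)

theorem horizontal_equation_of_motion (hh : Continuous h) (x y t : ℝ) :
    let u₁ := synth planeDot volume (horizontalSymbol waveKernel cl cs h f)
    let u₂ := synth planeDot volume (verticalSymbol waveKernel cl cs h f)
    iteratedDeriv 2 (fun τ => u₁ ((x, y), τ)) t =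
      (cl : ℂ) ^ 2 * iteratedDeriv 2 (fun x' => u₁ ((x', y), t)) x +
        (cs : ℂ) ^ 2 * iteratedDeriv 2 (fun y' => u₁ ((x, y'), t)) y +
        ((cl : ℂ) ^ 2 - (cs : ℂ) ^ 2) *
          deriv (fun x' => deriv (fun y' => u₂ ((x', y'), t)) y) x := by
  have hmotion := iteratedDeriv_two_synth_of_hasDerivAt_forceSymbol
    (isSymbol_horizontalSymbol_waveKernel hh) (isSymbol_horizontalSymbol_cosKernel hh)
    (isSymbol_verticalSymbol_waveKernel hh) .zero (hasDerivAt_elasticSymbol_waveKernel hh)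
    (hasDerivAt_horizontalSymbol_cosKernel (cl := cl) (cs := cs) (f := f) hh) x y t
  rwa [synth_eq_zero (F := fun _ _ => 0) fun _ => rfl, add_zero] at hmotion

theorem vertical_equation_of_motion (hh : Continuous h) (x y t : ℝ) :
    let u₁ := synth planeDot volume (horizontalSymbol waveKernel cl cs h f)
    let u₂ := synth planeDot volume (verticalSymbol waveKernel cl cs h f)
    iteratedDeriv 2 (fun τ => u₂ ((x, y), τ)) t =
      (cl : ℂ) ^ 2 * iteratedDeriv 2 (fun y' => u₂ ((x, y'), t)) y +
        (cs : ℂ) ^ 2 * iteratedDeriv 2 (fun x' => u₂ ((x', y), t)) x +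
        ((cl : ℂ) ^ 2 - (cs : ℂ) ^ 2) *
          deriv (fun x' => deriv (fun y' => u₁ ((x', y'), t)) y) x +
        synth planeDot volume (fun p t => h t • f p) ((x, y), t) := by
  have hmotion := iteratedDeriv_two_synth_of_hasDerivAt_forceSymbol
    (isSymbol_verticalSymbol_waveKernel hh) (isSymbol_verticalSymbol_cosKernel hh)
    (isSymbol_horizontalSymbol_waveKernel hh) (isSymbol_source hh f)
    (hasDerivAt_elasticSymbol_waveKernel hh)
    (hasDerivAt_verticalSymbol_cosKernel (cl := cl) (cs := cs) hh) x y t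
  rwa [add_comm (_ • iteratedDeriv 2 _ x)] at hmotion

theorem synth_elasticSymbol_initial_conditions
    (hwave : IsSymbol volume (elasticSymbol waveKernel cl cs a b h f))
    (hcos : IsSymbol volume (elasticSymbol cosKernel cl cs a b h f)) (hh : Continuous h)
    (x : ℝ × ℝ) :
    synth planeDot volume (elasticSymbol waveKernel cl cs a b h f) (x, 0) = 0 ∧
      deriv (fun τ => synth planeDot volume (elasticSymbol waveKernel cl cs a b h f) (x, τ)) 0 =
        0 :=
  ⟨synth_eq_zero elasticSymbol_zero_time,
    (hasDerivAt_synth_time hwave hcos (hasDerivAt_elasticSymbol_waveKernel hh) x 0).deriv.trans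
      (synth_eq_zero elasticSymbol_zero_time)⟩

theorem horizontal_initial_conditions (hh : Continuous h) (x : ℝ × ℝ) :
    let u₁ := synth planeDot volume (horizontalSymbol waveKernel cl cs h f)
    u₁ (x, 0) = 0 ∧ deriv (fun τ => u₁ (x, τ)) 0 = 0 :=
  synth_elasticSymbol_initial_conditions (isSymbol_horizontalSymbol_waveKernel hh)
    (isSymbol_horizontalSymbol_cosKernel hh) hh x

theorem vertical_initial_conditions (hh : Continuous h) (x : ℝ × ℝ) :
    let u₂ := synth planeDot volume (verticalSymbol waveKernel cl cs h f)
    u₂ (x, 0) = 0 ∧ deriv (fun τ => u₂ (x, τ)) 0 = 0 :=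
  synth_elasticSymbol_initial_conditions (isSymbol_verticalSymbol_waveKernel hh)
    (isSymbol_verticalSymbol_cosKernel hh) hh x

theorem synth_horizontalSymbol_const_smul (c : ℂ) (q : (ℝ × ℝ) × ℝ) :
    synth planeDot volume (horizontalSymbol K cl cs h (c • f)) q =
      c * synth planeDot volume (horizontalSymbol K cl cs h f) q := by
  rw [horizontalSymbol, elasticSymbol_const_smul, synth_const_smul, smul_eq_mul, horizontalSymbol]

theorem synth_verticalSymbol_const_smul (c : ℂ) (q : (ℝ × ℝ) × ℝ) :
    synth planeDot volume (verticalSymbol K cl cs h (c • f)) q =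
      c * synth planeDot volume (verticalSymbol K cl cs h f) q := by
  rw [verticalSymbol, elasticSymbol_const_smul, synth_const_smul, smul_eq_mul, verticalSymbol]

theorem waveSpeed_pos_and_sq {modulus rho c : ℝ} (hmodulus : 0 < modulus) (hrho : 0 < rho)
    (hc : c = Real.sqrt (modulus / rho)) : 0 < c ∧ (c : ℂ) ^ 2 = modulus / rho := by
  refine ⟨hc ▸ Real.sqrt_pos.2 (div_pos hmodulus hrho), ?_⟩
  exact_mod_cast hc ▸ Real.sq_sqrt (div_pos hmodulus hrho).le

end Displacement

/-- The Fourier integral operator solution formulas for the plane-strain displacements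
`u₁`, `u₂` solve the plane-strain equations of motion with body force `(0, g·h)`,
with zero initial data. -/
theorem stmt_10 (lam mu rho : ℝ) (hrho : 0 < rho) (hmu : 0 < mu) (hlm : 0 < lam + 2 * mu)
    (cl cs : ℝ)
    (hcl : cl = Real.sqrt ((lam + 2 * mu) / rho))
    (hcs : cs = Real.sqrt (mu / rho))
    (g : SchwartzMap (ℝ × ℝ) ℝ)
    (ghat : ℝ × ℝ → ℂ)
    (hghat : ∀ p : ℝ × ℝ, ghat p =
      ∫ q : ℝ × ℝ, Complex.exp (-(Complex.I * ((q.1 * p.1 + q.2 * p.2 : ℝ) : ℂ))) *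
        ((g q : ℝ) : ℂ))
    (h : ℝ → ℝ) (hh : Continuous h)
    (uhat₁ uhat₂ : ℝ × ℝ → ℝ → ℂ)
    (huhat₁0 : ∀ t : ℝ, uhat₁ 0 t = 0)
    (huhat₂0 : ∀ t : ℝ, uhat₂ 0 t = ghat 0 * ∫ s in (0:ℝ)..t, (((t - s) * h s : ℝ) : ℂ))
    (huhat₁ : ∀ p : ℝ × ℝ, p ≠ 0 → ∀ t : ℝ, uhat₁ p t =
      ∫ s in (0:ℝ)..t,
        (((Real.sin (cl * (t - s) * Real.sqrt (p.1 ^ 2 + p.2 ^ 2)) /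
            (cl * Real.sqrt (p.1 ^ 2 + p.2 ^ 2)) -
          Real.sin (cs * (t - s) * Real.sqrt (p.1 ^ 2 + p.2 ^ 2)) /
            (cs * Real.sqrt (p.1 ^ 2 + p.2 ^ 2))) *
          (p.1 * p.2 / (Real.sqrt (p.1 ^ 2 + p.2 ^ 2)) ^ 2) * h s : ℝ) : ℂ) * ghat p)
    (huhat₂ : ∀ p : ℝ × ℝ, p ≠ 0 → ∀ t : ℝ, uhat₂ p t =
      ∫ s in (0:ℝ)..t,
        (((Real.sin (cl * (t - s) * Real.sqrt (p.1 ^ 2 + p.2 ^ 2)) /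
            (cl * Real.sqrt (p.1 ^ 2 + p.2 ^ 2)) *
            (p.2 ^ 2 / (Real.sqrt (p.1 ^ 2 + p.2 ^ 2)) ^ 2) +
          Real.sin (cs * (t - s) * Real.sqrt (p.1 ^ 2 + p.2 ^ 2)) /
            (cs * Real.sqrt (p.1 ^ 2 + p.2 ^ 2)) *
            (p.1 ^ 2 / (Real.sqrt (p.1 ^ 2 + p.2 ^ 2)) ^ 2)) * h s : ℝ) : ℂ) * ghat p)
    (u₁ u₂ : ℝ → ℝ → ℝ → ℂ)
    (hu₁ : ∀ x y t : ℝ, u₁ x y t = (((2 * Real.pi) ^ 2 : ℝ) : ℂ)⁻¹ *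
      ∫ p : ℝ × ℝ, Complex.exp (Complex.I * ((x * p.1 + y * p.2 : ℝ) : ℂ)) * uhat₁ p t)
    (hu₂ : ∀ x y t : ℝ, u₂ x y t = (((2 * Real.pi) ^ 2 : ℝ) : ℂ)⁻¹ *
      ∫ p : ℝ × ℝ, Complex.exp (Complex.I * ((x * p.1 + y * p.2 : ℝ) : ℂ)) * uhat₂ p t) :
    (∀ x y t : ℝ, Integrable (fun p : ℝ × ℝ =>
        Complex.exp (Complex.I * ((x * p.1 + y * p.2 : ℝ) : ℂ)) * uhat₁ p t)) ∧
    (∀ x y t : ℝ, Integrable (fun p : ℝ × ℝ =>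
        Complex.exp (Complex.I * ((x * p.1 + y * p.2 : ℝ) : ℂ)) * uhat₂ p t)) ∧
    ContDiff ℝ 2 (fun q : ℝ × ℝ × ℝ => u₁ q.1 q.2.1 q.2.2) ∧
    ContDiff ℝ 2 (fun q : ℝ × ℝ × ℝ => u₂ q.1 q.2.1 q.2.2) ∧
    (∀ x y t : ℝ,
      iteratedDeriv 2 (fun τ : ℝ => u₁ x y τ) t =
        ((1 / rho : ℝ) : ℂ) * (((lam + 2 * mu : ℝ) : ℂ) * iteratedDeriv 2 (fun x' => u₁ x' y t) x +
          ((mu : ℝ) : ℂ) * iteratedDeriv 2 (fun y' => u₁ x y' t) y +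
          ((lam + mu : ℝ) : ℂ) * deriv (fun x' => deriv (fun y' => u₂ x' y' t) y) x) ∧
      iteratedDeriv 2 (fun τ : ℝ => u₂ x y τ) t =
        ((1 / rho : ℝ) : ℂ) * (((lam + 2 * mu : ℝ) : ℂ) * iteratedDeriv 2 (fun y' => u₂ x y' t) y +
          ((mu : ℝ) : ℂ) * iteratedDeriv 2 (fun x' => u₂ x' y t) x +
          ((lam + mu : ℝ) : ℂ) * deriv (fun x' => deriv (fun y' => u₁ x' y' t) y) x) +
        ((g (x, y) * h t : ℝ) : ℂ)) ∧
    (∀ x y : ℝ, u₁ x y 0 = 0 ∧ deriv (fun τ : ℝ => u₁ x y τ) 0 = 0 ∧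
      u₂ x y 0 = 0 ∧ deriv (fun τ : ℝ => u₂ x y τ) 0 = 0) := by
  obtain ⟨hcl_pos, hcl_sq⟩ := waveSpeed_pos_and_sq hlm hrho hcl
  obtain ⟨hcs_pos, hcs_sq⟩ := waveSpeed_pos_and_sq hmu hrho hcs
  obtain rfl : ghat = planeFourier g :=
    funext fun p => (hghat p).trans (planeFourier_apply g p).symm
  obtain rfl := eq_horizontalSymbol hcl_pos.ne' hcs_pos.ne' hh huhat₁0 huhat₁
  obtain rfl := eq_verticalSymbol hcl_pos.ne' hcs_pos.ne' hh huhat₂0 huhat₂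
  obtain rfl : u₁ = _ := funext₃ fun x y t =>
    (hu₁ x y t).trans (synth_horizontalSymbol_const_smul _ ((x, y), t)).symm
  obtain rfl : u₂ = _ := funext₃ fun x y t =>
    (hu₂ x y t).trans (synth_verticalSymbol_const_smul _ ((x, y), t)).symm
  have hcoords : ContDiff ℝ 2 fun q : ℝ × ℝ × ℝ => ((q.1, q.2.1), q.2.2) := by fun_prop
  refine ⟨fun x y t => (isSymbol_horizontalSymbol_waveKernel hh).integrable_planeWave_smul planeDot
      ((x, y), t),
    fun x y t => (isSymbol_verticalSymbol_waveKernel hh).integrable_planeWave_smul planeDot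
      ((x, y), t),
    (contDiff_synth_horizontalSymbol hh).comp hcoords,
    (contDiff_synth_verticalSymbol hh).comp hcoords,
    fun x y t => ⟨?_, ?_⟩,
    fun x y => and_assoc.1
      ⟨horizontal_initial_conditions hh (x, y), vertical_initial_conditions hh (x, y)⟩⟩
  · rw [horizontal_equation_of_motion hh, hcl_sq, hcs_sq]
    push_cast
    ring
  · rw [vertical_equation_of_motion hh, hcl_sq, hcs_sq, synth_source_planeFourier]
    push_cast
    ring
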